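/- Let 0 < γ < 1, let a < b, c < d, and let u be six times continuously differentiable on [a, b] × [c, d]. For positive integers M_x, M_y set h_x = (b − a)/M_x, h_y = (d − c)/M_y, x_{l/2} = a + l h_x/2 (l = 0, …, 2M_x), y_{r/2} = c + r h_y/2 (r = 0, …, 2M_y), and let u_Q be the piecewise Lagrange quadratic interpolant of u on this tensor grid. Then there is a constant C > 0, depending only on u, γ, a, b, c, d, such that for all M_x, M_y ≥ 1 and all indices 1 ≤ i ≤ 2M_x − 1, 1 ≤ j ≤ 2M_y − 1, |∫_c^d ∫_a^b (u(x, y) − u_Q(x, y)) · ((x_{i/2} − x)² + (y_{j/2} − y)²)^{−γ/2} dx dy| ≤ C (h_x^4 (η_{i/2})^{−γ} + h_y^4 (η̃_{j/2})^{−γ} + h_x^{5−γ} + h_y^{5−γ}), where η_{i/2} = min{x_{i/2} − a, b − x_{i/2}} and η̃_{j/2} = min{y_{j/2} − c, d − y_{j/2}}. -/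

import Mathlib

open MeasureTheory

/-- The piecewise quadratic Lagrange basis function attached to the node
`a + l·h/2` of the grid with integer nodes `a + k·h` (`k = 0, …, M`) and
half-integer midpoints. For odd `l` it is the interior bump
`4(x − x_{(l−1)/2})(x_{(l+1)/2} − x)/h²` on its cell, and for even `l` it is the
usual quadratic nodal basis function supported on the two adjacent cells. -/
noncomputable def quadBasis (a h : ℝ) (l : ℕ) (x : ℝ) : ℝ :=
  if l % 2 = 1 then
    if a + ((l : ℝ) - 1) * h / 2 ≤ x ∧ x ≤ a + ((l : ℝ) + 1) * h / 2 then
      4 * (x - (a + ((l : ℝ) - 1) * h / 2)) * ((a + ((l : ℝ) + 1) * h / 2) - x) / h ^ 2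
    else 0
  else
    if a + ((l : ℝ) - 2) * h / 2 ≤ x ∧ x ≤ a + (l : ℝ) * h / 2 then
      (x - (a + ((l : ℝ) - 2) * h / 2)) *
        (2 * x - ((a + (l : ℝ) * h / 2) + (a + ((l : ℝ) - 2) * h / 2))) / h ^ 2
    else if a + (l : ℝ) * h / 2 ≤ x ∧ x ≤ a + ((l : ℝ) + 2) * h / 2 then
      ((a + ((l : ℝ) + 2) * h / 2) - x) *
        (((a + ((l : ℝ) + 2) * h / 2) + (a + (l : ℝ) * h / 2)) - 2 * x) / h ^ 2
    else 0

/-- The piecewise Lagrange quadratic interpolant of `u` on the tensor grid with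
nodes `(a + l·h_x/2, c + r·h_y/2)`, `l = 0, …, 2M_x`, `r = 0, …, 2M_y`. -/
noncomputable def quadInterp (a c hx hy : ℝ) (Mx My : ℕ) (u : ℝ → ℝ → ℝ)
    (x y : ℝ) : ℝ :=
  ∑ l ∈ Finset.range (2 * Mx + 1), ∑ r ∈ Finset.range (2 * My + 1),
    quadBasis a hx l x * quadBasis c hy r y *
      u (a + (l : ℝ) * hx / 2) (c + (r : ℝ) * hy / 2)

/-!
On a cell of width `h`, the error of quadratic interpolation of a `C⁴` function is a multiple of
the nodal cubic up to `O(h⁴)`, and the nodal cubic has mean zero. Against a weight `k`, the error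
therefore contributes only `O(h⁴)` times `h sup |k|` plus the oscillation of `k` on the cell, and
the oscillations add up to at most the total variation of `k`. On the line at distance
`t ≠ 0` from the singularity the Cauchy kernel is unimodal with maximum `|t|^(-γ)`, so its total
variation is at most `2 |t|^(-γ)`, which is integrable in `t` because `γ < 1`.

With `I_x`, `I_y` the one-dimensional interpolation operators, `u - I_x I_y u` is
`(u - I_x u) + I_x (u - I_y u)`: the first summand is integrated first in `x`, the second first in
`y`, where `I_x` costs only its Lebesgue constant, at most `3`. The resulting bound
`O(h_x⁴ + h_y⁴)` is uniform in the position of the singularity, and it implies the weighted one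
because `η` never exceeds the side of the rectangle.
-/

section Basis

variable {a h x : ℝ}

lemma abs_quadBasis_le_one (hh : 0 < h) (l : ℕ) (x : ℝ) : |quadBasis a h l x| ≤ 1 := by
  have h2 : 0 < h ^ 2 := by positivity
  unfold quadBasis
  split_ifs with hodd hcell hleft hright
  · obtain ⟨h1, h3⟩ := hcell
    rw [abs_le, le_div_iff₀ h2, div_le_iff₀ h2]
    constructor
    · nlinarith [mul_nonneg (sub_nonneg.2 h1) (sub_nonneg.2 h3)]
    · nlinarith [sq_nonneg (x - a - l * h / 2)]
  · simp
  · obtain ⟨h1, h3⟩ := hleft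
    rw [abs_le, le_div_iff₀ h2, div_le_iff₀ h2]
    obtain ⟨s, rfl⟩ : ∃ s, x = a + ((l : ℝ) - 2) * h / 2 + s :=
      ⟨_, (add_sub_cancel _ _).symm⟩
    constructor
    · nlinarith [sq_nonneg (s - h / 4)]
    · nlinarith
  · obtain ⟨h1, h3⟩ := hright
    rw [abs_le, le_div_iff₀ h2, div_le_iff₀ h2]
    obtain ⟨s, rfl⟩ : ∃ s, x = a + ((l : ℝ) + 2) * h / 2 - s :=
      ⟨_, (sub_sub_cancel _ _).symm⟩
    constructor
    · nlinarith [sq_nonneg (s - h / 4)]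
    · nlinarith
  · simp

lemma measurable_quadBasis (a h : ℝ) (l : ℕ) : Measurable (quadBasis a h l) := by
  have hcell (p q : ℝ) : MeasurableSet {x : ℝ | p ≤ x ∧ x ≤ q} := measurableSet_Icc
  unfold quadBasis
  split_ifs
  · exact Measurable.ite (hcell _ _) (by fun_prop) measurable_const
  · exact Measurable.ite (hcell _ _) (by fun_prop)
      (Measurable.ite (hcell _ _) (by fun_prop) measurable_const)

lemma quadBasis_add_two_mul (a h : ℝ) (l m : ℕ) (x : ℝ) :
    quadBasis a h (2 * m + l) x = quadBasis (a + m * h) h l x := by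
  have shift (s : ℝ) : a + (((2 * m + l : ℕ) : ℝ) + s) * h / 2 = a + m * h + (l + s) * h / 2 := by
    push_cast; ring
  have shift₀ : a + ((2 * m + l : ℕ) : ℝ) * h / 2 = a + m * h + l * h / 2 := by
    push_cast; ring
  unfold quadBasis
  simp only [sub_eq_add_neg (_ : ℝ) 1, sub_eq_add_neg (_ : ℝ) 2, shift, shift₀,
    Nat.mul_add_mod]

lemma quadBasis_eq_zero_of_le (hh : 0 < h) {l m : ℕ} (hl : 2 * m < l) (hx : x ≤ a + m * h) :
    quadBasis a h l x = 0 := by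
  have hl1 : 2 * (m : ℝ) + 1 ≤ l := by exact_mod_cast hl
  unfold quadBasis
  split_ifs with hodd hcell hleft hright
  · have : x = a + ((l : ℝ) - 1) * h / 2 := by nlinarith
    simp [this]
  · rfl
  · have hl2 : 2 * (m : ℝ) + 2 ≤ l := by
      have : 2 * m + 2 ≤ l := by omega
      exact_mod_cast this
    have : x = a + ((l : ℝ) - 2) * h / 2 := by nlinarith
    simp [this]
  · nlinarith
  · rfl

lemma quadBasis_eq_zero_of_ge (hh : 0 < h) {l m : ℕ} (hl : l < 2 * m) (hx : a + m * h ≤ x) :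
    quadBasis a h l x = 0 := by
  have hl1 : (l : ℝ) + 1 ≤ 2 * m := by exact_mod_cast hl
  unfold quadBasis
  split_ifs with hodd hcell hleft hright
  · have : x = a + ((l : ℝ) + 1) * h / 2 := by nlinarith
    simp [this]
  · rfl
  · nlinarith
  · have hl2 : (l : ℝ) + 2 ≤ 2 * m := by
      have : l + 2 ≤ 2 * m := by omega
      exact_mod_cast this
    have : x = a + ((l : ℝ) + 2) * h / 2 := by nlinarith
    simp [this]
  · rfl

lemma quadBasis_zero (hx : x ∈ Set.Icc a (a + h)) :
    quadBasis a h 0 x = (a + h - x) * (2 * a + h - 2 * x) / h ^ 2 := by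
  unfold quadBasis
  rw [if_neg (by simp), Nat.cast_zero]
  split_ifs with hleft hright
  · have : x = a := by linarith [hx.1]
    rw [this]; ring
  · ring
  · exact absurd ⟨by linarith [hx.1], by linarith [hx.2]⟩ hright

lemma quadBasis_one (hx : x ∈ Set.Icc a (a + h)) :
    quadBasis a h 1 x = 4 * (x - a) * (a + h - x) / h ^ 2 := by
  unfold quadBasis
  rw [if_pos rfl, Nat.cast_one, if_pos ⟨by linarith [hx.1], by linarith [hx.2]⟩]
  ring

lemma quadBasis_two (hx : x ∈ Set.Icc a (a + h)) :
    quadBasis a h 2 x = (x - a) * (2 * x - 2 * a - h) / h ^ 2 := by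
  unfold quadBasis
  rw [if_neg (by simp), Nat.cast_ofNat, if_pos ⟨by linarith [hx.1], by linarith [hx.2]⟩]
  ring

lemma sum_range_eq_sum_cell (hh : 0 < h) {m M : ℕ} (hm : m < M)
    (hx : x ∈ Set.Icc (a + m * h) (a + m * h + h)) {G : ℕ → ℝ}
    (hG : ∀ l, quadBasis a h l x = 0 → G l = 0) :
    ∑ l ∈ Finset.range (2 * M + 1), G l = ∑ l ∈ Finset.range 3, G (2 * m + l) := by
  rw [← Finset.sum_subset (s₁ := Finset.Ico (2 * m) (2 * m + 3)), Finset.sum_Ico_eq_sum_range,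
    Nat.add_sub_cancel_left]
  · intro l hl
    rw [Finset.mem_Ico] at hl
    rw [Finset.mem_range]
    omega
  · intro l _ hl
    rw [Finset.mem_Ico, not_and_or, not_le, not_lt] at hl
    refine hG l ?_
    rcases hl with hl | hl
    · exact quadBasis_eq_zero_of_ge hh hl hx.1
    · exact quadBasis_eq_zero_of_le (m := m + 1) hh (by omega)
        (by push_cast; linarith [hx.2])

lemma exists_mem_cell {M : ℕ} (hM : 1 ≤ M) (hx : x ∈ Set.Icc a (a + M * h)) :
    ∃ m < M, x ∈ Set.Icc (a + m * h) (a + m * h + h) := by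
  induction M, hM using Nat.le_induction with
  | base => exact ⟨0, one_pos, by simpa using hx⟩
  | succ M _ ih =>
    rcases le_total x (a + M * h) with hle | hge
    · obtain ⟨m, hm, hcell⟩ := ih ⟨hx.1, hle⟩
      exact ⟨m, by omega, hcell⟩
    · have hx2 := hx.2
      push_cast at hx2
      exact ⟨M, by omega, hge, by linarith⟩

lemma sum_abs_quadBasis_le (hh : 0 < h) {M : ℕ} (hM : 1 ≤ M) (hx : x ∈ Set.Icc a (a + M * h)) :
    ∑ l ∈ Finset.range (2 * M + 1), |quadBasis a h l x| ≤ 3 := by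
  obtain ⟨m, hm, hcell⟩ := exists_mem_cell hM hx
  rw [sum_range_eq_sum_cell hh hm hcell fun l hl => abs_eq_zero.2 hl]
  calc ∑ l ∈ Finset.range 3, |quadBasis a h (2 * m + l) x|
      ≤ ∑ _l ∈ Finset.range 3, (1 : ℝ) :=
        Finset.sum_le_sum fun l _ => abs_quadBasis_le_one hh _ x
    _ = 3 := by simp

lemma node_mem_Icc (hh : 0 ≤ h) {M l : ℕ} (hl : l ≤ 2 * M) :
    a + (l : ℝ) * h / 2 ∈ Set.Icc a (a + M * h) := by
  have hl' : (l : ℝ) ≤ 2 * M := by exact_mod_cast hl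
  constructor
  · have : 0 ≤ (l : ℝ) * h / 2 := by positivity
    linarith
  · linarith [mul_le_mul_of_nonneg_right hl' hh]

end Basis

/-- The one-dimensional piecewise quadratic Lagrange interpolant of `f`, from which the tensor
product interpolant `quadInterp` is obtained by iteration; its nodes are `a + l * h / 2` for
`l ≤ 2 * M`. -/
noncomputable def quadInterpLine (a h : ℝ) (M : ℕ) (f : ℝ → ℝ) (x : ℝ) : ℝ :=
  ∑ l ∈ Finset.range (2 * M + 1), quadBasis a h l x * f (a + (l : ℝ) * h / 2)

lemma quadInterp_eq_quadInterpLine (a c hx hy : ℝ) (Mx My : ℕ) (u : ℝ → ℝ → ℝ) (x y : ℝ) :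
    quadInterp a c hx hy Mx My u x y =
      quadInterpLine a hx Mx (fun s => quadInterpLine c hy My (u s) y) x := by
  simp only [quadInterp, quadInterpLine, Finset.mul_sum, mul_assoc]

section Line

variable {a h x : ℝ} {M : ℕ}

lemma quadInterpLine_sub (f g : ℝ → ℝ) :
    quadInterpLine a h M (fun s => f s - g s) x =
      quadInterpLine a h M f x - quadInterpLine a h M g x := by
  simp only [quadInterpLine, mul_sub, Finset.sum_sub_distrib]

lemma quadInterpLine_mul_const (f : ℝ → ℝ) (κ : ℝ) :
    quadInterpLine a h M (fun s => f s * κ) x = quadInterpLine a h M f x * κ := by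
  simp only [quadInterpLine, Finset.sum_mul, mul_assoc]

lemma abs_quadInterpLine_le (hh : 0 < h) (hM : 1 ≤ M) (hx : x ∈ Set.Icc a (a + M * h))
    {f : ℝ → ℝ} {B : ℝ} (hf : ∀ l ≤ 2 * M, |f (a + (l : ℝ) * h / 2)| ≤ B) :
    |quadInterpLine a h M f x| ≤ 3 * B := by
  have hB : 0 ≤ B := (abs_nonneg _).trans (hf 0 (Nat.zero_le _))
  calc |quadInterpLine a h M f x|
      ≤ ∑ l ∈ Finset.range (2 * M + 1), |quadBasis a h l x| * B := by
        refine (Finset.abs_sum_le_sum_abs _ _).trans (Finset.sum_le_sum fun l hl => ?_)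
        rw [abs_mul]
        exact mul_le_mul_of_nonneg_left (hf l (Nat.lt_succ_iff.1 (Finset.mem_range.1 hl)))
          (abs_nonneg _)
    _ ≤ 3 * B := by
        rw [← Finset.sum_mul]
        exact mul_le_mul_of_nonneg_right (sum_abs_quadBasis_le hh hM hx) hB

lemma quadInterpLine_eq_cell (hh : 0 < h) {m : ℕ} (hm : m < M)
    (hx : x ∈ Set.Icc (a + m * h) (a + m * h + h)) (f : ℝ → ℝ) :
    quadInterpLine a h M f x = quadInterpLine (a + m * h) h 1 f x := by
  unfold quadInterpLine
  rw [sum_range_eq_sum_cell hh hm hx fun l hl => by rw [hl, zero_mul]]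
  refine Finset.sum_congr rfl fun l _ => ?_
  rw [quadBasis_add_two_mul]
  congr 2
  push_cast
  ring

lemma memLp_top_quadInterpLine {α : Type*} [MeasurableSpace α] {μ : Measure α} (hh : 0 < h)
    {g : α → ℝ} (hg : Measurable g) {F : ℝ → α → ℝ}
    (hF : ∀ l ≤ 2 * M, MemLp (F (a + (l : ℝ) * h / 2)) ⊤ μ) :
    MemLp (fun z => quadInterpLine a h M (fun s => F s z) (g z)) ⊤ μ := by
  refine memLp_finsetSum _ fun l hl => ?_
  have hbasis : MemLp (fun z => quadBasis a h l (g z)) ⊤ μ :=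
    memLp_top_of_bound ((measurable_quadBasis a h l).comp hg).aestronglyMeasurable 1
      (Filter.Eventually.of_forall fun _ => abs_quadBasis_le_one hh l _)
  exact (hF l (Nat.lt_succ_iff.1 (Finset.mem_range.1 hl))).mul' hbasis

lemma integral_quadInterpLine {c d : ℝ} {G : ℝ → ℝ → ℝ}
    (hG : ∀ l ≤ 2 * M, IntervalIntegrable (G (a + (l : ℝ) * h / 2)) volume c d) :
    ∫ y in c..d, quadInterpLine a h M (fun s => G s y) x =
      quadInterpLine a h M (fun s => ∫ y in c..d, G s y) x := by
  unfold quadInterpLine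
  rw [intervalIntegral.integral_finsetSum fun l hl =>
    (hG l (Nat.lt_succ_iff.1 (Finset.mem_range.1 hl))).const_mul _]
  simp only [intervalIntegral.integral_const_mul]

end Line

/-- The monic cubic vanishing at the three nodes of the cell `[p, p + h]`: the error of quadratic
interpolation of a cubic is a multiple of it. -/
noncomputable def nodalCubic (p h x : ℝ) : ℝ :=
  (x - p) * (x - (p + h / 2)) * (x - (p + h))

/-- `f` is `C⁴` on `s`, with third and fourth derivatives bounded by `N`: the third one controls
the leading part of the interpolation error, the fourth one the Taylor remainder. -/
structure HasQuarticBoundOn (N : ℝ) (f : ℝ → ℝ) (s : Set ℝ) : Prop where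
  contDiffOn : ContDiffOn ℝ 4 f s
  abs_third_le : ∀ x ∈ s, |iteratedDerivWithin 3 f s x| ≤ N
  abs_fourth_le : ∀ x ∈ s, |iteratedDerivWithin 4 f s x| ≤ N

lemma HasQuarticBoundOn.nonneg {N : ℝ} {f : ℝ → ℝ} {s : Set ℝ} (hf : HasQuarticBoundOn N f s)
    (hs : s.Nonempty) : 0 ≤ N :=
  (abs_nonneg _).trans (hf.abs_third_le _ hs.some_mem)

lemma HasQuarticBoundOn.mono {N : ℝ} {f : ℝ → ℝ} {s t : Set ℝ} (hf : HasQuarticBoundOn N f t)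
    (hs : UniqueDiffOn ℝ s) (ht : UniqueDiffOn ℝ t) (hst : s ⊆ t) : HasQuarticBoundOn N f s := by
  have restrict {n : ℕ} (hn : n ≤ 4) {x : ℝ} (hx : x ∈ s) :
      iteratedDerivWithin n f s x = iteratedDerivWithin n f t x := by
    rw [iteratedDerivWithin, iteratedDerivWithin, iteratedFDerivWithin_subset hst hs ht
      (hf.contDiffOn.of_le (by exact_mod_cast hn)) hx]
  refine ⟨hf.contDiffOn.mono hst, fun x hx => ?_, fun x hx => ?_⟩
  · rw [restrict (by norm_num) hx]
    exact hf.abs_third_le x (hst hx)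
  · rw [restrict le_rfl hx]
    exact hf.abs_fourth_le x (hst hx)

section Cell

variable {p h x N : ℝ}

lemma continuous_nodalCubic (p h : ℝ) : Continuous (nodalCubic p h) := by
  unfold nodalCubic
  fun_prop

lemma abs_nodalCubic_le (hx : x ∈ Set.Icc p (p + h)) : |nodalCubic p h x| ≤ h ^ 3 := by
  obtain ⟨h1, h2⟩ := hx
  have hh : 0 ≤ h := by linarith
  have hleft : |x - p| ≤ h := abs_le.2 ⟨by linarith, by linarith⟩
  have hmid : |x - (p + h / 2)| ≤ h := abs_le.2 ⟨by linarith, by linarith⟩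
  have hright : |x - (p + h)| ≤ h := abs_le.2 ⟨by linarith, by linarith⟩
  rw [nodalCubic, abs_mul, abs_mul]
  calc |x - p| * |x - (p + h / 2)| * |x - (p + h)| ≤ h * h * h := by gcongr
    _ = h ^ 3 := by ring

lemma integral_nodalCubic (p h : ℝ) : ∫ x in p..(p + h), nodalCubic p h x = 0 := by
  have hderiv (x : ℝ) :
      HasDerivAt (fun x => ((x - p) * (x - (p + h))) ^ 2 / 4) (nodalCubic p h x) x := by
    have hp := (hasDerivAt_id x).sub_const p
    have hq := (hasDerivAt_id x).sub_const (p + h)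
    refine (((hp.mul hq).pow 2).div_const 4).congr_deriv ?_
    simp only [nodalCubic, id, Pi.mul_apply]
    ring
  rw [intervalIntegral.integral_eq_sub_of_hasDerivAt (fun x _ => hderiv x)
    ((continuous_nodalCubic p h).intervalIntegrable _ _)]
  ring

lemma cubic_sub_quadInterpLine (hh : 0 < h) (c₀ c₁ c₂ c₃ : ℝ) (hx : x ∈ Set.Icc p (p + h)) :
    (c₀ + c₁ * (x - p) + c₂ * (x - p) ^ 2 + c₃ * (x - p) ^ 3) - quadInterpLine p h 1
        (fun t => c₀ + c₁ * (t - p) + c₂ * (t - p) ^ 2 + c₃ * (t - p) ^ 3) x =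
      c₃ * nodalCubic p h x := by
  simp only [quadInterpLine, Finset.sum_range_succ, Finset.sum_range_zero, mul_one, Nat.cast_zero,
    Nat.cast_one, Nat.cast_ofNat, quadBasis_zero hx, quadBasis_one hx, quadBasis_two hx, nodalCubic]
  field_simp
  ring

lemma HasQuarticBoundOn.exists_abs_sub_cubic_le (hh : 0 ≤ h) {f : ℝ → ℝ}
    (hf : HasQuarticBoundOn N f (Set.Icc p (p + h))) :
    ∃ c₀ c₁ c₂ c₃ : ℝ, |c₃| ≤ N ∧ ∀ t ∈ Set.Icc p (p + h),
      |f t - (c₀ + c₁ * (t - p) + c₂ * (t - p) ^ 2 + c₃ * (t - p) ^ 3)| ≤ N * h ^ 4 / 6 := by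
  have hp : p ≤ p + h := by linarith
  have hN : 0 ≤ N := hf.nonneg (Set.nonempty_Icc.2 hp)
  let D (n : ℕ) : ℝ := iteratedDerivWithin n f (Set.Icc p (p + h)) p
  refine ⟨f p, D 1, D 2 / 2, D 3 / 6, ?_, fun t ht => ?_⟩
  · have := hf.abs_third_le p (Set.left_mem_Icc.2 hp)
    rw [abs_div, abs_of_pos (by norm_num : (0 : ℝ) < 6)]
    linarith [abs_nonneg (D 3)]
  have htaylor := taylor_mean_remainder_bound (n := 3) hp (by exact_mod_cast hf.contDiffOn) ht
    hf.abs_fourth_le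
  have hpoly : taylorWithinEval f 3 (Set.Icc p (p + h)) p t =
      f p + D 1 * (t - p) + D 2 / 2 * (t - p) ^ 2 + D 3 / 6 * (t - p) ^ 3 := by
    simp only [taylorWithinEval_succ, taylor_within_zero_eval, smul_eq_mul, Nat.factorial, D]
    push_cast
    ring
  rw [hpoly, Real.norm_eq_abs] at htaylor
  refine htaylor.trans ?_
  have hpow : (t - p) ^ 4 ≤ h ^ 4 :=
    pow_le_pow_left₀ (sub_nonneg.2 ht.1) (by linarith [ht.2]) 4
  have := mul_le_mul_of_nonneg_left hpow hN
  norm_num [Nat.factorial]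
  linarith

lemma HasQuarticBoundOn.exists_abs_error_sub_nodalCubic_le (hh : 0 < h) {f : ℝ → ℝ}
    (hf : HasQuarticBoundOn N f (Set.Icc p (p + h))) :
    ∃ κ, |κ| ≤ N ∧ ∀ x ∈ Set.Icc p (p + h),
      |f x - quadInterpLine p h 1 f x - κ * nodalCubic p h x| ≤ N * h ^ 4 := by
  obtain ⟨c₀, c₁, c₂, c₃, hc₃, hrem⟩ := hf.exists_abs_sub_cubic_le hh.le
  refine ⟨c₃, hc₃, fun x hx => ?_⟩
  set P : ℝ → ℝ := fun t => c₀ + c₁ * (t - p) + c₂ * (t - p) ^ 2 + c₃ * (t - p) ^ 3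
  have hcell : p + ((1 : ℕ) : ℝ) * h = p + h := by rw [Nat.cast_one, one_mul]
  have hinterp : |quadInterpLine p h 1 (fun t => f t - P t) x| ≤ 3 * (N * h ^ 4 / 6) :=
    abs_quadInterpLine_le hh le_rfl (by rwa [hcell]) fun l hl =>
      hrem _ (hcell ▸ node_mem_Icc hh.le hl)
  have herror : f x - quadInterpLine p h 1 f x - c₃ * nodalCubic p h x =
      (f x - P x) - quadInterpLine p h 1 (fun t => f t - P t) x := by
    rw [quadInterpLine_sub, ← cubic_sub_quadInterpLine hh c₀ c₁ c₂ c₃ hx]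
    ring
  have hN : 0 ≤ N * h ^ 4 := mul_nonneg ((abs_nonneg _).trans hc₃) (by positivity)
  calc |f x - quadInterpLine p h 1 f x - c₃ * nodalCubic p h x|
      ≤ |f x - P x| + |quadInterpLine p h 1 (fun t => f t - P t) x| := by
        rw [herror]; exact abs_sub _ _
    _ ≤ N * h ^ 4 / 6 + 3 * (N * h ^ 4 / 6) := add_le_add (hrem x hx) hinterp
    _ ≤ N * h ^ 4 := by linarith

-- The nodal cubic has mean zero on the cell, so the kernel may be replaced by its increments
-- `k x - k p` in the leading part of the error.
lemma abs_integral_cell_le {m ω : ℝ} (hh : 0 < h) {f k : ℝ → ℝ}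
    (hf : HasQuarticBoundOn N f (Set.Icc p (p + h)))
    (hint : IntervalIntegrable (fun x => (f x - quadInterpLine p h 1 f x) * k x) volume p (p + h))
    (hkm : ∀ x ∈ Set.Icc p (p + h), |k x| ≤ m)
    (hkω : ∀ x ∈ Set.Icc p (p + h), |k x - k p| ≤ ω) :
    |∫ x in p..(p + h), (f x - quadInterpLine p h 1 f x) * k x| ≤ N * h ^ 4 * (h * m + ω) := by
  obtain ⟨κ, hκ, herror⟩ := hf.exists_abs_error_sub_nodalCubic_le hh
  have hN : 0 ≤ N := (abs_nonneg _).trans hκ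
  set e : ℝ → ℝ := fun x => f x - quadInterpLine p h 1 f x
  set w := nodalCubic p h
  have hmean : ∫ x in p..(p + h), e x * k x = ∫ x in p..(p + h), (e x * k x - κ * k p * w x) := by
    rw [intervalIntegral.integral_sub hint
        (((continuous_nodalCubic p h).intervalIntegrable _ _).const_mul _),
      intervalIntegral.integral_const_mul, integral_nodalCubic, mul_zero, sub_zero]
  have hpointwise : ∀ x ∈ Set.uIoc p (p + h),
      ‖e x * k x - κ * k p * w x‖ ≤ N * h ^ 4 * m + N * h ^ 3 * ω := by
    intro x hx
    rw [Set.uIoc_of_le (by linarith)] at hx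
    replace hx := Set.Ioc_subset_Icc_self hx
    have hκw : |κ * w x| ≤ N * h ^ 3 := by
      rw [abs_mul]
      exact mul_le_mul hκ (abs_nodalCubic_le hx) (abs_nonneg _) hN
    calc ‖e x * k x - κ * k p * w x‖
        = |(e x - κ * w x) * k x + κ * w x * (k x - k p)| := by
          rw [Real.norm_eq_abs]; congr 1; ring
      _ ≤ |e x - κ * w x| * |k x| + |κ * w x| * |k x - k p| := by
          rw [← abs_mul, ← abs_mul]; exact abs_add_le _ _
      _ ≤ N * h ^ 4 * m + N * h ^ 3 * ω := by
          gcongr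
          exacts [herror x hx, hkm x hx, hkω x hx]
  rw [hmean]
  refine (intervalIntegral.norm_integral_le_of_norm_le_const hpointwise).trans_eq ?_
  rw [add_sub_cancel_left, abs_of_pos hh]
  ring

end Cell

section TestedError

variable {a h N : ℝ} {M : ℕ} {f k : ℝ → ℝ}

lemma memLp_top_of_continuousOn_isCompact {X : Type*} [TopologicalSpace X] [MeasurableSpace X]
    [OpensMeasurableSpace X] [T2Space X] {μ : Measure X} {g : X → ℝ} {s : Set X}
    (hs : IsCompact s) (hg : ContinuousOn g s) : MemLp g ⊤ (μ.restrict s) := by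
  obtain ⟨D, hD⟩ := hs.exists_bound_of_continuousOn hg
  exact memLp_top_of_bound (hg.aestronglyMeasurable_of_isCompact hs hs.measurableSet) D
    ((ae_restrict_iff' hs.measurableSet).2 (Filter.Eventually.of_forall hD))

lemma intervalIntegrable_error_mul (hh : 0 < h) (hf : ContinuousOn f (Set.Icc a (a + M * h)))
    (hk : ContinuousOn k (Set.Icc a (a + M * h))) :
    IntervalIntegrable (fun x => (f x - quadInterpLine a h M f x) * k x) volume a (a + M * h) := by
  have hab : a ≤ a + M * h := le_add_of_nonneg_right (by positivity)
  rw [intervalIntegrable_iff_integrableOn_Icc_of_le hab]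
  refine (hk.integrableOn_Icc).integrable.mul_of_top_right ?_
  exact (memLp_top_of_continuousOn_isCompact isCompact_Icc hf).sub
    (memLp_top_quadInterpLine hh measurable_id fun l _ => memLp_top_const _)

lemma abs_integral_error_mul_cell_le {m v : ℝ} (hh : 0 < h) {n : ℕ} (hn : n < M)
    (hf : HasQuarticBoundOn N f (Set.Icc a (a + M * h)))
    (hk : ContinuousOn k (Set.Icc a (a + M * h)))
    (hkm : ∀ x ∈ Set.Icc (a + n * h) (a + n * h + h), |k x| ≤ m)
    (hkv : ∀ x ∈ Set.Icc (a + n * h) (a + n * h + h), |k x - k (a + n * h)| ≤ v) :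
    |∫ x in (a + n * h)..(a + n * h + h), (f x - quadInterpLine a h M f x) * k x| ≤
      N * h ^ 4 * (h * m + v) := by
  have hlt : a + n * h < a + n * h + h := by linarith
  have hn' : ((n : ℝ) + 1) * h ≤ M * h := by gcongr; exact_mod_cast hn
  have hsub : Set.Icc (a + n * h) (a + n * h + h) ⊆ Set.Icc a (a + M * h) :=
    Set.Icc_subset_Icc (le_add_of_nonneg_right (by positivity)) (by linarith)
  have hleft := hsub (Set.left_mem_Icc.2 hlt.le)
  have hint : IntervalIntegrable (fun x => (f x - quadInterpLine a h M f x) * k x) volume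
      (a + n * h) (a + n * h + h) :=
    (intervalIntegrable_error_mul hh hf.contDiffOn.continuousOn hk).mono_set <| by
      rwa [Set.uIcc_of_le hlt.le, Set.uIcc_of_le (hleft.1.trans hleft.2)]
  have hlocal : Set.EqOn (fun x => (f x - quadInterpLine a h M f x) * k x)
      (fun x => (f x - quadInterpLine (a + n * h) h 1 f x) * k x)
      (Set.uIcc (a + n * h) (a + n * h + h)) := fun x hx => by
    rw [Set.uIcc_of_le hlt.le] at hx
    simp only [quadInterpLine_eq_cell hh hn hx]
  rw [intervalIntegral.integral_congr hlocal]
  exact abs_integral_cell_le hh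
    (hf.mono (uniqueDiffOn_Icc hlt) (uniqueDiffOn_Icc (by linarith [hleft.1])) hsub)
    (hint.congr (hlocal.mono Set.uIoc_subset_uIcc)) hkm hkv

-- `V` plays the role of the total variation of `k`: its increments dominate those of `k`.
lemma abs_integral_error_mul_le {m : ℝ} (hh : 0 < h) {V : ℝ → ℝ}
    (hf : HasQuarticBoundOn N f (Set.Icc a (a + M * h)))
    (hk : ContinuousOn k (Set.Icc a (a + M * h)))
    (hkm : ∀ x ∈ Set.Icc a (a + M * h), |k x| ≤ m)
    (hkV : ∀ x ∈ Set.Icc a (a + M * h), ∀ y ∈ Set.Icc a (a + M * h), x ≤ y →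
      |k y - k x| ≤ V y - V x) :
    |∫ x in a..(a + M * h), (f x - quadInterpLine a h M f x) * k x| ≤
      N * h ^ 4 * (M * h * m + (V (a + M * h) - V a)) := by
  set g : ℝ → ℝ := fun x => (f x - quadInterpLine a h M f x) * k x
  have hnode {n : ℕ} (hn : n ≤ M) : a + n * h ∈ Set.Icc a (a + M * h) :=
    ⟨le_add_of_nonneg_right (by positivity), by gcongr⟩
  have hnext (n : ℕ) : a + (n + 1 : ℕ) * h = a + n * h + h := by push_cast; ring
  have hcell : ∀ n < M, |∫ x in (a + n * h)..(a + (n + 1 : ℕ) * h), g x| ≤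
      N * h ^ 4 * (h * m + (V (a + (n + 1 : ℕ) * h) - V (a + n * h))) := by
    intro n hn
    have hright := hnode (Nat.succ_le_of_lt hn)
    rw [Nat.succ_eq_add_one, hnext] at hright
    have hsub : Set.Icc (a + n * h) (a + n * h + h) ⊆ Set.Icc a (a + M * h) :=
      Set.Icc_subset_Icc (hnode hn.le).1 hright.2
    rw [hnext]
    refine abs_integral_error_mul_cell_le hh hn hf hk (fun x hx => hkm x (hsub hx)) fun x hx => ?_
    have hrest := (abs_nonneg _).trans (hkV x (hsub hx) _ hright hx.2)
    linarith [hkV _ (hnode hn.le) x (hsub hx) hx.1]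
  have hint : ∀ n < M, IntervalIntegrable g volume (a + n * h) (a + (n + 1 : ℕ) * h) :=
    fun n hn => (intervalIntegrable_error_mul hh hf.contDiffOn.continuousOn hk).mono_set <| by
      rw [Set.uIcc_of_le (le_add_of_nonneg_right (by positivity) : a ≤ a + M * h)]
      exact Set.uIcc_subset_Icc (hnode hn.le) (hnode hn)
  have hsum := intervalIntegral.sum_integral_adjacent_intervals (a := fun n : ℕ => a + n * h) hint
  simp only [Nat.cast_zero, zero_mul, add_zero] at hsum
  rw [← hsum]
  calc |∑ n ∈ Finset.range M, ∫ x in (a + n * h)..(a + (n + 1 : ℕ) * h), g x|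
      ≤ ∑ n ∈ Finset.range M,
          N * h ^ 4 * (h * m + (V (a + (n + 1 : ℕ) * h) - V (a + n * h))) :=
        (Finset.abs_sum_le_sum_abs _ _).trans
          (Finset.sum_le_sum fun n hn => hcell n (Finset.mem_range.1 hn))
    _ = N * h ^ 4 * (M * h * m + (V (a + M * h) - V a)) := by
        rw [← Finset.mul_sum, Finset.sum_add_distrib,
          Finset.sum_range_sub (fun n : ℕ => V (a + n * h))]
        simp only [Finset.sum_const, Finset.card_range, nsmul_eq_mul, Nat.cast_zero, zero_mul,
          add_zero, mul_assoc]

end TestedError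

/-- The variation of `k` measured from the point `z`, for a function `k` that increases up to `z`
and decreases after it; the increments of `k` are dominated by those of this function. -/
noncomputable def unimodalVariation (k : ℝ → ℝ) (z x : ℝ) : ℝ :=
  if x ≤ z then k x - k z else k z - k x

section Unimodal

variable {k : ℝ → ℝ} {x y z : ℝ}

lemma abs_sub_le_unimodalVariation_sub (hl : MonotoneOn k (Set.Iic z))
    (hr : AntitoneOn k (Set.Ici z)) (hxy : x ≤ y) :
    |k y - k x| ≤ unimodalVariation k z y - unimodalVariation k z x := by
  unfold unimodalVariation
  split_ifs with hy hx hx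
  · rw [abs_of_nonneg (sub_nonneg.2 (hl hx hy hxy))]
    linarith
  · exact absurd (hxy.trans hy) hx
  · have hkx := hl hx Set.self_mem_Iic hx
    have hky := hr Set.self_mem_Ici (not_le.1 hy).le (not_le.1 hy).le
    exact abs_le.2 ⟨by linarith, by linarith⟩
  · have := hr (not_le.1 hx).le (not_le.1 hy).le hxy
    exact abs_le.2 ⟨by linarith, by linarith⟩

lemma abs_unimodalVariation_le (hk : 0 ≤ k x) (hkz : k x ≤ k z) :
    |unimodalVariation k z x| ≤ k z := by
  unfold unimodalVariation
  split_ifs <;> exact abs_le.2 ⟨by linarith, by linarith⟩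

end Unimodal

/-- The additive Cauchy kernel as a function of the two coordinate differences. For `γ ≠ 0` its
value at the singularity is the junk value `0 ^ (-γ / 2) = 0`, so it is bounded on lines that avoid
the origin only. -/
noncomputable def cauchyKernel (γ x t : ℝ) : ℝ := (x ^ 2 + t ^ 2) ^ (-γ / 2)

section Kernel

variable {γ x y t : ℝ}

lemma cauchyKernel_nonneg (γ x t : ℝ) : 0 ≤ cauchyKernel γ x t :=
  Real.rpow_nonneg (by positivity) _

lemma cauchyKernel_comm (γ x t : ℝ) : cauchyKernel γ x t = cauchyKernel γ t x := by
  rw [cauchyKernel, cauchyKernel, add_comm]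

lemma cauchyKernel_zero_left (γ t : ℝ) : cauchyKernel γ 0 t = |t| ^ (-γ) := by
  rw [cauchyKernel, zero_pow two_ne_zero, zero_add, ← sq_abs, ← Real.rpow_natCast,
    ← Real.rpow_mul (abs_nonneg t)]
  congr 1
  push_cast
  ring

lemma cauchyKernel_le_cauchyKernel (hγ : 0 ≤ γ) (ht : t ≠ 0) (hxy : |x| ≤ |y|) :
    cauchyKernel γ y t ≤ cauchyKernel γ x t :=
  Real.rpow_le_rpow_of_nonpos (by positivity) (by gcongr ?_ + _; exact sq_le_sq.2 hxy)
    (by linarith)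

lemma cauchyKernel_le_abs_rpow (hγ : 0 ≤ γ) (ht : t ≠ 0) (x : ℝ) :
    cauchyKernel γ x t ≤ |t| ^ (-γ) :=
  (cauchyKernel_le_cauchyKernel hγ ht (by simp)).trans_eq (cauchyKernel_zero_left γ t)

lemma continuous_cauchyKernel_left (γ : ℝ) (ht : t ≠ 0) :
    Continuous fun x => cauchyKernel γ x t :=
  Continuous.rpow_const (by fun_prop) fun _ => Or.inl (by positivity)

lemma abs_integral_error_mul_cauchyKernel_le {a h N : ℝ} {M : ℕ} {f : ℝ → ℝ} (hγ : 0 ≤ γ)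
    (hh : 0 < h) (hf : HasQuarticBoundOn N f (Set.Icc a (a + M * h))) (z : ℝ) (ht : t ≠ 0) :
    |∫ x in a..(a + M * h), (f x - quadInterpLine a h M f x) * cauchyKernel γ (z - x) t| ≤
      N * h ^ 4 * (M * h + 2) * |t| ^ (-γ) := by
  set k : ℝ → ℝ := fun x => cauchyKernel γ (z - x) t with hk
  have hkz : k z = |t| ^ (-γ) := by rw [hk]; simp only [sub_self, cauchyKernel_zero_left]
  have hk0 (x : ℝ) : 0 ≤ k x := cauchyKernel_nonneg _ _ _
  have hkm (x : ℝ) : k x ≤ |t| ^ (-γ) := cauchyKernel_le_abs_rpow hγ ht _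
  have hmono : MonotoneOn k (Set.Iic z) := fun x (hx : x ≤ z) y (hy : y ≤ z) hxy =>
    cauchyKernel_le_cauchyKernel hγ ht <| by
      rw [abs_of_nonneg (sub_nonneg.2 hx), abs_of_nonneg (sub_nonneg.2 hy)]
      linarith
  have hanti : AntitoneOn k (Set.Ici z) := fun x (hx : z ≤ x) y (hy : z ≤ y) hxy =>
    cauchyKernel_le_cauchyKernel hγ ht <| by
      rw [abs_of_nonpos (sub_nonpos.2 hx), abs_of_nonpos (sub_nonpos.2 hy)]
      linarith
  have hV (x : ℝ) : |unimodalVariation k z x| ≤ |t| ^ (-γ) :=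
    hkz ▸ abs_unimodalVariation_le (hk0 x) (hkz ▸ hkm x)
  have hN : 0 ≤ N := hf.nonneg (Set.nonempty_Icc.2 (le_add_of_nonneg_right (by positivity)))
  calc |∫ x in a..(a + M * h), (f x - quadInterpLine a h M f x) * k x|
      ≤ N * h ^ 4 * (M * h * |t| ^ (-γ) +
          (unimodalVariation k z (a + M * h) - unimodalVariation k z a)) :=
        abs_integral_error_mul_le hh hf
          ((continuous_cauchyKernel_left γ ht).comp (by fun_prop)).continuousOn
          (fun x _ => by rw [abs_of_nonneg (hk0 x)]; exact hkm x)
          fun x _ y _ hxy => abs_sub_le_unimodalVariation_sub hmono hanti hxy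
    _ ≤ N * h ^ 4 * (M * h * |t| ^ (-γ) + (|t| ^ (-γ) + |t| ^ (-γ))) := by
        gcongr
        linarith [abs_le.1 (hV (a + M * h)), abs_le.1 (hV a)]
    _ = N * h ^ 4 * (M * h + 2) * |t| ^ (-γ) := by ring

end Kernel

section Slice

variable {E : Type*} [NormedAddCommGroup E] [NormedSpace ℝ E] {s : Set ℝ} {t : Set E}

lemma exists_continuousOn_iteratedDerivWithin_slice (hs : UniqueDiffOn ℝ s)
    (ht : UniqueDiffOn ℝ t) (n : ℕ) {U : ℝ × E → ℝ} (hU : ContDiffOn ℝ n U (s ×ˢ t)) :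
    ∃ V : ℝ × E → ℝ, ContinuousOn V (s ×ˢ t) ∧
      ∀ y ∈ t, ∀ x ∈ s, iteratedDerivWithin n (fun x => U (x, y)) s x = V (x, y) := by
  induction n generalizing U with
  | zero => exact ⟨U, hU.continuousOn, fun y _ x _ => by rw [iteratedDerivWithin_zero]⟩
  | succ n ih =>
    let U' (z : ℝ × E) : ℝ := fderivWithin ℝ U (s ×ˢ t) z (1, 0)
    have hU' : ContDiffOn ℝ n U' (s ×ˢ t) :=
      (hU.fderivWithin (hs.prod ht) (by norm_cast)).clm_apply contDiffOn_const
    have hderiv : ∀ y ∈ t, Set.EqOn (derivWithin (fun x => U (x, y)) s) (fun x => U' (x, y)) s := by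
      intro y hy x hx
      have hdiff : HasFDerivWithinAt U (fderivWithin ℝ U (s ×ˢ t) (x, y)) (s ×ˢ t) (x, y) :=
        ((hU.differentiableOn (by simp)) (x, y) ⟨hx, hy⟩).hasFDerivWithinAt
      have hline : HasDerivWithinAt (fun x => (x, y)) ((1 : ℝ), (0 : E)) s x :=
        (hasDerivWithinAt_id x s).prodMk (hasDerivWithinAt_const x s y)
      have hmaps : Set.MapsTo (fun x => (x, y)) s (s ×ˢ t) := fun _ hx' => ⟨hx', hy⟩
      exact (hdiff.comp_hasDerivWithinAt x hline hmaps).derivWithin (hs x hx)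
    obtain ⟨V, hV, hVeq⟩ := ih hU'
    refine ⟨V, hV, fun y hy x hx => ?_⟩
    rw [iteratedDerivWithin_succ', iteratedDerivWithin_congr (hderiv y hy) hx, hVeq y hy x hx]

lemma eventually_hasQuarticBoundOn_slice (hs : UniqueDiffOn ℝ s) (ht : UniqueDiffOn ℝ t)
    (hsc : IsCompact s) (htc : IsCompact t) {U : ℝ × E → ℝ} (hU : ContDiffOn ℝ 4 U (s ×ˢ t)) :
    ∀ᶠ N in Filter.atTop, ∀ y ∈ t, HasQuarticBoundOn N (fun x => U (x, y)) s := by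
  have bound {n : ℕ} (hn : n ≤ 4) : ∃ D, ∀ y ∈ t, ∀ x ∈ s,
      |iteratedDerivWithin n (fun x => U (x, y)) s x| ≤ D := by
    obtain ⟨V, hV, hVeq⟩ := exists_continuousOn_iteratedDerivWithin_slice hs ht n
      (hU.of_le (by exact_mod_cast hn))
    obtain ⟨D, hD⟩ := (hsc.prod htc).exists_bound_of_continuousOn hV
    exact ⟨D, fun y hy x hx => (hVeq y hy x hx).symm ▸ hD _ (Set.mk_mem_prod hx hy)⟩
  obtain ⟨D₃, hD₃⟩ := bound (n := 3) (by norm_num)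
  obtain ⟨D₄, hD₄⟩ := bound (n := 4) le_rfl
  filter_upwards [Filter.eventually_ge_atTop D₃, Filter.eventually_ge_atTop D₄] with N hN₃ hN₄ y hy
  have hline : ContDiffOn ℝ 4 (fun x : ℝ => (x, y)) s := contDiffOn_id.prodMk contDiffOn_const
  exact
    { contDiffOn := hU.comp hline fun x hx => ⟨hx, hy⟩
      abs_third_le := fun x hx => (hD₃ y hy x hx).trans hN₃
      abs_fourth_le := fun x hx => (hD₄ y hy x hx).trans hN₄ }

end Slice

section SingularWeight

variable {γ c d q : ℝ}

lemma intervalIntegrable_abs_rpow_neg (hγ : γ < 1) (p q : ℝ) :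
    IntervalIntegrable (fun s : ℝ => |s| ^ (-γ)) volume p q := by
  refine intervalIntegrable_of_even (fun s => by rw [abs_neg]) fun L hL => ?_
  have hrpow : IntervalIntegrable (fun s : ℝ => s ^ (-γ)) volume 0 L :=
    intervalIntegral.intervalIntegrable_rpow' (by linarith)
  refine hrpow.congr fun s hs => ?_
  rw [Set.uIoc_of_le hL.le] at hs
  simp only [abs_of_pos hs.1]

lemma integral_abs_rpow_neg (hγ : γ < 1) {L : ℝ} (hL : 0 ≤ L) :
    ∫ s in 0..L, |s| ^ (-γ) = L ^ (1 - γ) / (1 - γ) := by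
  have habs : Set.EqOn (fun s : ℝ => |s| ^ (-γ)) (fun s => s ^ (-γ)) (Set.uIcc 0 L) :=
    fun s hs => by
      rw [Set.uIcc_of_le hL] at hs
      simp only [abs_of_nonneg hs.1]
  rw [intervalIntegral.integral_congr habs, integral_rpow (Or.inl (by linarith)),
    Real.zero_rpow (by linarith), sub_zero, neg_add_eq_sub]

lemma intervalIntegrable_abs_sub_rpow_neg (hγ : γ < 1) (q c d : ℝ) :
    IntervalIntegrable (fun y => |q - y| ^ (-γ)) volume c d := by
  simpa only [sub_sub_cancel] using
    (intervalIntegrable_abs_rpow_neg hγ (q - c) (q - d)).comp_sub_left q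

lemma integral_abs_sub_rpow_neg_le (hγ : γ < 1) (hq : q ∈ Set.Icc c d) :
    ∫ y in c..d, |q - y| ^ (-γ) ≤ 2 * (d - c) ^ (1 - γ) / (1 - γ) := by
  have hint := intervalIntegrable_abs_sub_rpow_neg hγ q
  have hleft : ∫ y in c..q, |q - y| ^ (-γ) = (q - c) ^ (1 - γ) / (1 - γ) := by
    rw [intervalIntegral.integral_comp_sub_left (fun s => |s| ^ (-γ)), sub_self,
      integral_abs_rpow_neg hγ (sub_nonneg.2 hq.1)]
  have hright : ∫ y in q..d, |q - y| ^ (-γ) = (d - q) ^ (1 - γ) / (1 - γ) := by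
    simp only [abs_sub_comm q]
    rw [intervalIntegral.integral_comp_sub_right (fun s => |s| ^ (-γ)), sub_self,
      integral_abs_rpow_neg hγ (sub_nonneg.2 hq.2)]
  have : 0 < 1 - γ := sub_pos.2 hγ
  rw [← intervalIntegral.integral_add_adjacent_intervals (hint c q) (hint q d), hleft, hright,
    two_mul, ← add_div]
  gcongr
  exacts [sub_nonneg.2 hq.1, hq.2, sub_nonneg.2 hq.2, hq.1]

lemma abs_integral_le_of_abs_le_rpow_neg (hγ : γ < 1) (hq : q ∈ Set.Icc c d) {D : ℝ}
    (hD : 0 ≤ D) {F : ℝ → ℝ} (hF : ∀ y ∈ Set.Icc c d, y ≠ q → |F y| ≤ D * |q - y| ^ (-γ)) :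
    |∫ y in c..d, F y| ≤ D * (2 * (d - c) ^ (1 - γ) / (1 - γ)) := by
  have hae : ∀ᵐ y, y ∈ Set.Ioc c d → ‖F y‖ ≤ D * |q - y| ^ (-γ) := by
    filter_upwards [Measure.ae_ne volume q] with y hy hyI
    exact hF y (Set.Ioc_subset_Icc_self hyI) hy
  calc |∫ y in c..d, F y| ≤ ∫ y in c..d, D * |q - y| ^ (-γ) :=
        intervalIntegral.norm_integral_le_of_norm_le (hq.1.trans hq.2) hae
          ((intervalIntegrable_abs_sub_rpow_neg hγ q c d).const_mul D)
    _ ≤ D * (2 * (d - c) ^ (1 - γ) / (1 - γ)) := by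
        rw [intervalIntegral.integral_const_mul]
        exact mul_le_mul_of_nonneg_left (integral_abs_sub_rpow_neg_le hγ hq) hD

end SingularWeight

section Plane

variable {γ a b c d : ℝ}

lemma integral_integral_add_swap (hab : a ≤ b) (hcd : c ≤ d) {F G : ℝ → ℝ → ℝ}
    (hF : IntegrableOn (Function.uncurry F) (Set.Icc a b ×ˢ Set.Icc c d))
    (hG : IntegrableOn (Function.uncurry G) (Set.Icc a b ×ˢ Set.Icc c d)) :
    ∫ y in c..d, ∫ x in a..b, (F x y + G x y) =
      (∫ y in c..d, ∫ x in a..b, F x y) + ∫ x in a..b, ∫ y in c..d, G x y := by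
  have hsub : Set.uIoc a b ×ˢ Set.uIoc c d ⊆ Set.Icc a b ×ˢ Set.Icc c d := by
    rw [Set.uIoc_of_le hab, Set.uIoc_of_le hcd]
    exact Set.prod_mono Set.Ioc_subset_Icc_self Set.Ioc_subset_Icc_self
  replace hF := hF.mono_set hsub
  replace hG := hG.mono_set hsub
  rw [← intervalIntegral_intervalIntegral_swap hF,
    ← intervalIntegral_intervalIntegral_swap (F := fun x y => F x y + G x y) (hF.add hG)]
  rw [IntegrableOn, Measure.volume_eq_prod, ← Measure.prod_restrict, Set.uIoc_of_le hab,
    Set.uIoc_of_le hcd] at hF hG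
  simp only [intervalIntegral.integral_of_le hab, intervalIntegral.integral_of_le hcd]
  exact integral_integral_add hF hG

lemma integrableOn_cauchyKernel (hγ0 : 0 ≤ γ) (hγ1 : γ < 1) (hcd : c ≤ d) (p q : ℝ) :
    IntegrableOn (fun z : ℝ × ℝ => cauchyKernel γ (p - z.1) (q - z.2))
      (Set.Icc a b ×ˢ Set.Icc c d) := by
  rw [IntegrableOn, Measure.volume_eq_prod, ← Measure.prod_restrict]
  have hweight : Integrable (fun z : ℝ × ℝ => |q - z.2| ^ (-γ))
      ((volume.restrict (Set.Icc a b)).prod (volume.restrict (Set.Icc c d))) :=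
    ((intervalIntegrable_iff_integrableOn_Icc_of_le hcd).1
      (intervalIntegrable_abs_sub_rpow_neg hγ1 q c d)).integrable.comp_snd _
  have hmeas : Measurable fun z : ℝ × ℝ => cauchyKernel γ (p - z.1) (q - z.2) := by
    unfold cauchyKernel
    fun_prop
  refine hweight.mono' hmeas.aestronglyMeasurable ?_
  have hne : ∀ᵐ z : ℝ × ℝ ∂(volume.restrict (Set.Icc a b)).prod (volume.restrict (Set.Icc c d)),
      z.2 ≠ q :=
    Measure.quasiMeasurePreserving_snd.ae (Measure.ae_ne _ q)
  filter_upwards [hne] with z hz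
  rw [Real.norm_eq_abs, abs_of_nonneg (cauchyKernel_nonneg _ _ _)]
  exact cauchyKernel_le_abs_rpow hγ0 (sub_ne_zero.2 hz.symm) _

end Plane

section Tensor

variable {γ a c hx hy N : ℝ} {Mx My : ℕ} {u : ℝ → ℝ → ℝ}

lemma sub_quadInterp_eq_add (x y : ℝ) :
    u x y - quadInterp a c hx hy Mx My u x y =
      (u x y - quadInterpLine a hx Mx (fun s => u s y) x) +
        quadInterpLine a hx Mx (fun s => u s y - quadInterpLine c hy My (u s) y) x := by
  rw [quadInterp_eq_quadInterpLine, quadInterpLine_sub]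
  ring

lemma abs_integral_integral_error_mul_cauchyKernel_le {d q : ℝ} (hγ0 : 0 ≤ γ) (hγ1 : γ < 1)
    (hhx : 0 < hx)
    (hu : ∀ y ∈ Set.Icc c d, HasQuarticBoundOn N (fun x => u x y) (Set.Icc a (a + Mx * hx)))
    (p : ℝ) (hq : q ∈ Set.Icc c d) :
    |∫ y in c..d, ∫ x in a..(a + Mx * hx),
        (u x y - quadInterpLine a hx Mx (fun s => u s y) x) * cauchyKernel γ (p - x) (q - y)| ≤
      N * hx ^ 4 * (Mx * hx + 2) * (2 * (d - c) ^ (1 - γ) / (1 - γ)) := by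
  have hN : 0 ≤ N :=
    (hu q hq).nonneg (Set.nonempty_Icc.2 (le_add_of_nonneg_right (by positivity)))
  exact abs_integral_le_of_abs_le_rpow_neg hγ1 hq (by positivity) fun y hy hyq =>
    abs_integral_error_mul_cauchyKernel_le hγ0 hhx (hu y hy) p (sub_ne_zero.2 hyq.symm)

lemma abs_integral_quadInterpLine_error_mul_cauchyKernel_le (hγ0 : 0 ≤ γ) (hhx : 0 < hx)
    (hMx : 1 ≤ Mx) (hhy : 0 < hy) {x : ℝ} (hxI : x ∈ Set.Icc a (a + Mx * hx))
    (hu : ∀ s ∈ Set.Icc a (a + Mx * hx), HasQuarticBoundOn N (u s) (Set.Icc c (c + My * hy)))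
    {r : ℝ} (hr : r ≠ 0) (q : ℝ) :
    |∫ y in c..(c + My * hy),
        quadInterpLine a hx Mx (fun s => u s y - quadInterpLine c hy My (u s) y) x *
          cauchyKernel γ r (q - y)| ≤
      3 * (N * hy ^ 4 * (My * hy + 2) * |r| ^ (-γ)) := by
  have hnode {l : ℕ} (hl : l ≤ 2 * Mx) :
      HasQuarticBoundOn N (u (a + (l : ℝ) * hx / 2)) (Set.Icc c (c + My * hy)) :=
    hu _ (node_mem_Icc hhx.le hl)
  have hkernel : Continuous fun y => cauchyKernel γ (q - y) r :=
    (continuous_cauchyKernel_left γ hr).comp (by fun_prop)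
  simp only [← quadInterpLine_mul_const, cauchyKernel_comm γ r]
  rw [integral_quadInterpLine fun l hl =>
    intervalIntegrable_error_mul hhy (hnode hl).contDiffOn.continuousOn hkernel.continuousOn]
  exact abs_quadInterpLine_le hhx hMx hxI fun l hl =>
    abs_integral_error_mul_cauchyKernel_le hγ0 hhy (hnode hl) q hr

lemma abs_integral_integral_quadInterpLine_error_mul_cauchyKernel_le {p : ℝ} (hγ0 : 0 ≤ γ)
    (hγ1 : γ < 1) (hhx : 0 < hx) (hMx : 1 ≤ Mx) (hhy : 0 < hy)
    (hu : ∀ s ∈ Set.Icc a (a + Mx * hx), HasQuarticBoundOn N (u s) (Set.Icc c (c + My * hy)))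
    (hp : p ∈ Set.Icc a (a + Mx * hx)) (q : ℝ) :
    |∫ x in a..(a + Mx * hx), ∫ y in c..(c + My * hy),
        quadInterpLine a hx Mx (fun s => u s y - quadInterpLine c hy My (u s) y) x *
          cauchyKernel γ (p - x) (q - y)| ≤
      3 * (N * hy ^ 4 * (My * hy + 2)) * (2 * (Mx * hx) ^ (1 - γ) / (1 - γ)) := by
  have hN : 0 ≤ N :=
    (hu p hp).nonneg (Set.nonempty_Icc.2 (le_add_of_nonneg_right (by positivity)))
  nth_rewrite 2 [← add_sub_cancel_left a (Mx * hx)]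
  refine abs_integral_le_of_abs_le_rpow_neg hγ1 hp (by positivity) fun x hxI hxp => ?_
  rw [mul_assoc 3]
  exact abs_integral_quadInterpLine_error_mul_cauchyKernel_le hγ0 hhx hMx hhy hxI hu
    (sub_ne_zero.2 hxp.symm) q

lemma integrableOn_mul_cauchyKernel {b d : ℝ} (hγ0 : 0 ≤ γ) (hγ1 : γ < 1) (hcd : c ≤ d)
    {g : ℝ × ℝ → ℝ} (hg : MemLp g ⊤ (volume.restrict (Set.Icc a b ×ˢ Set.Icc c d))) (p q : ℝ) :
    IntegrableOn (fun z : ℝ × ℝ => g z * cauchyKernel γ (p - z.1) (q - z.2))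
      (Set.Icc a b ×ˢ Set.Icc c d) :=
  Integrable.mul_of_top_right (integrableOn_cauchyKernel hγ0 hγ1 hcd p q) hg

lemma integral_integral_sub_quadInterp_mul_cauchyKernel (hγ0 : 0 ≤ γ) (hγ1 : γ < 1)
    (hhx : 0 < hx) (hhy : 0 < hy)
    (hu : ContinuousOn (Function.uncurry u)
      (Set.Icc a (a + Mx * hx) ×ˢ Set.Icc c (c + My * hy))) (p q : ℝ) :
    ∫ y in c..(c + My * hy), ∫ x in a..(a + Mx * hx),
        (u x y - quadInterp a c hx hy Mx My u x y) * cauchyKernel γ (p - x) (q - y) =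
      (∫ y in c..(c + My * hy), ∫ x in a..(a + Mx * hx),
        (u x y - quadInterpLine a hx Mx (fun s => u s y) x) * cauchyKernel γ (p - x) (q - y)) +
      ∫ x in a..(a + Mx * hx), ∫ y in c..(c + My * hy),
        quadInterpLine a hx Mx (fun s => u s y - quadInterpLine c hy My (u s) y) x *
          cauchyKernel γ (p - x) (q - y) := by
  have hab : a ≤ a + Mx * hx := le_add_of_nonneg_right (by positivity)
  have hcd : c ≤ c + My * hy := le_add_of_nonneg_right (by positivity)
  set R := Set.Icc a (a + Mx * hx) ×ˢ Set.Icc c (c + My * hy)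
  have hR : IsCompact R := isCompact_Icc.prod isCompact_Icc
  have hline {s : ℝ} (hs : s ∈ Set.Icc a (a + Mx * hx)) :
      MemLp (fun z : ℝ × ℝ => u s z.2) ⊤ (volume.restrict R) :=
    memLp_top_of_continuousOn_isCompact hR <|
      hu.comp (continuousOn_const.prodMk continuousOn_snd) fun z hz => ⟨hs, hz.2⟩
  have hx_node {l : ℕ} (hl : l ≤ 2 * Mx) := hline (node_mem_Icc hhx.le hl)
  simp only [sub_quadInterp_eq_add, add_mul]
  refine integral_integral_add_swap hab hcd
    (integrableOn_mul_cauchyKernel hγ0 hγ1 hcd (g := fun z => u z.1 z.2 - quadInterpLine a hx Mx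
      (fun s => u s z.2) z.1) ?_ p q)
    (integrableOn_mul_cauchyKernel hγ0 hγ1 hcd (g := fun z => quadInterpLine a hx Mx
      (fun s => u s z.2 - quadInterpLine c hy My (u s) z.2) z.1) ?_ p q)
  · exact (memLp_top_of_continuousOn_isCompact hR hu).sub
      (memLp_top_quadInterpLine hhx measurable_fst fun l hl => hx_node hl)
  · exact memLp_top_quadInterpLine hhx measurable_fst fun l hl => (hx_node hl).sub
      (memLp_top_quadInterpLine hhy measurable_snd fun r _ => memLp_top_const _)

end Tensor

theorem abs_integral_sub_quadInterp_mul_cauchyKernel_le {γ a c hx hy p q N : ℝ} {Mx My : ℕ}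
    {u : ℝ → ℝ → ℝ} (hγ0 : 0 ≤ γ) (hγ1 : γ < 1) (hhx : 0 < hx) (hMx : 1 ≤ Mx) (hhy : 0 < hy)
    (hu : ContinuousOn (Function.uncurry u)
      (Set.Icc a (a + Mx * hx) ×ˢ Set.Icc c (c + My * hy)))
    (hux : ∀ y ∈ Set.Icc c (c + My * hy),
      HasQuarticBoundOn N (fun x => u x y) (Set.Icc a (a + Mx * hx)))
    (huy : ∀ x ∈ Set.Icc a (a + Mx * hx), HasQuarticBoundOn N (u x) (Set.Icc c (c + My * hy)))
    (hp : p ∈ Set.Icc a (a + Mx * hx)) (hq : q ∈ Set.Icc c (c + My * hy)) :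
    |∫ y in c..(c + My * hy), ∫ x in a..(a + Mx * hx),
        (u x y - quadInterp a c hx hy Mx My u x y) * cauchyKernel γ (p - x) (q - y)| ≤
      N * hx ^ 4 * (Mx * hx + 2) * (2 * (My * hy) ^ (1 - γ) / (1 - γ)) +
        3 * (N * hy ^ 4 * (My * hy + 2)) * (2 * (Mx * hx) ^ (1 - γ) / (1 - γ)) := by
  have hx_error := abs_integral_integral_error_mul_cauchyKernel_le hγ0 hγ1 hhx hux p hq
  rw [add_sub_cancel_left] at hx_error
  rw [integral_integral_sub_quadInterp_mul_cauchyKernel hγ0 hγ1 hhx hhy hu]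
  exact (abs_add_le _ _).trans <| add_le_add hx_error <|
    abs_integral_integral_quadInterpLine_error_mul_cauchyKernel_le hγ0 hγ1 hhx hMx hhy huy hp q

theorem exists_abs_integral_sub_quadInterp_mul_cauchyKernel_le {γ a b c d : ℝ} (hγ0 : 0 ≤ γ)
    (hγ1 : γ < 1) (hab : a < b) (hcd : c < d) {u : ℝ → ℝ → ℝ}
    (hu : ContDiffOn ℝ 4 (Function.uncurry u) (Set.Icc a b ×ˢ Set.Icc c d)) :
    ∃ C > 0, ∀ Mx My : ℕ, 1 ≤ Mx → 1 ≤ My → ∀ p ∈ Set.Icc a b, ∀ q ∈ Set.Icc c d,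
      |∫ y in c..d, ∫ x in a..b,
          (u x y - quadInterp a c ((b - a) / Mx) ((d - c) / My) Mx My u x y) *
            cauchyKernel γ (p - x) (q - y)| ≤
        C * (((b - a) / Mx) ^ 4 + ((d - c) / My) ^ 4) := by
  have hux := eventually_hasQuarticBoundOn_slice (uniqueDiffOn_Icc hab) (uniqueDiffOn_Icc hcd)
    isCompact_Icc isCompact_Icc hu
  have huy := eventually_hasQuarticBoundOn_slice (uniqueDiffOn_Icc hcd) (uniqueDiffOn_Icc hab)
    isCompact_Icc isCompact_Icc (U := fun z => u z.2 z.1)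
    (hu.comp (contDiffOn_snd.prodMk contDiffOn_fst) fun z hz => ⟨hz.2, hz.1⟩)
  obtain ⟨N, hux, huy, hN⟩ := (hux.and (huy.and (Filter.eventually_gt_atTop 0))).exists
  have hweight {L : ℝ} (hL : 0 < L) : 0 < 2 * L ^ (1 - γ) / (1 - γ) :=
    div_pos (by positivity) (sub_pos.2 hγ1)
  set K₁ := N * (b - a + 2) * (2 * (d - c) ^ (1 - γ) / (1 - γ))
  set K₂ := 3 * (N * (d - c + 2)) * (2 * (b - a) ^ (1 - γ) / (1 - γ))
  have hK₁ : 0 < K₁ := mul_pos (mul_pos hN (by linarith)) (hweight (sub_pos.2 hcd))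
  have hK₂ : 0 < K₂ := mul_pos (mul_pos three_pos (mul_pos hN (by linarith)))
    (hweight (sub_pos.2 hab))
  refine ⟨K₁ + K₂, add_pos hK₁ hK₂, fun Mx My hMx hMy p hp q hq => ?_⟩
  set hx := (b - a) / Mx
  set hy := (d - c) / My
  have hMx_mul : Mx * hx = b - a := mul_div_cancel₀ _ (by positivity)
  have hMy_mul : My * hy = d - c := mul_div_cancel₀ _ (by positivity)
  have hb : a + Mx * hx = b := by rw [hMx_mul, add_sub_cancel]
  have hd : c + My * hy = d := by rw [hMy_mul, add_sub_cancel]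
  have main := abs_integral_sub_quadInterp_mul_cauchyKernel_le (u := u) (a := a) (c := c)
    (hx := hx) (hy := hy) (Mx := Mx) (My := My) (N := N) (p := p) (q := q) hγ0 hγ1
    (div_pos (sub_pos.2 hab) (by positivity)) hMx (div_pos (sub_pos.2 hcd) (by positivity))
  rw [hb, hd, hMx_mul, hMy_mul] at main
  refine (main hu.continuousOn hux huy hp hq).trans ?_
  calc _ = K₁ * hx ^ 4 + K₂ * hy ^ 4 := by ring
    _ ≤ (K₁ + K₂) * hx ^ 4 + (K₁ + K₂) * hy ^ 4 := by
      gcongr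
      exacts [le_add_of_nonneg_right hK₂.le, le_add_of_nonneg_left hK₁.le]
    _ = (K₁ + K₂) * (hx ^ 4 + hy ^ 4) := by ring

section Weight

variable {γ a h : ℝ} {M i : ℕ}

lemma node_mem_Ioo (hh : 0 < h) (hi : 1 ≤ i) (hiM : i ≤ 2 * M - 1) :
    a + (i : ℝ) * h / 2 ∈ Set.Ioo a (a + M * h) := by
  have hi0 : 0 < (i : ℝ) := by exact_mod_cast hi
  have hiM' : (i : ℝ) < 2 * M := by exact_mod_cast (by omega : i < 2 * M)
  exact ⟨by linarith [mul_pos hi0 hh], by linarith [mul_lt_mul_of_pos_right hiM' hh]⟩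

lemma le_rpow_mul_mul_rpow_neg {b x s : ℝ} (hγ : 0 ≤ γ) (hs : 0 ≤ s) (hx : x ∈ Set.Ioo a b) :
    s ≤ (b - a) ^ γ * (s * min (x - a) (b - x) ^ (-γ)) := by
  have hmin : 0 < min (x - a) (b - x) := lt_min (sub_pos.2 hx.1) (sub_pos.2 hx.2)
  have hle : min (x - a) (b - x) ≤ b - a := (min_le_left _ _).trans (by linarith [hx.2])
  have hone : 1 ≤ (b - a) ^ γ * min (x - a) (b - x) ^ (-γ) :=
    calc 1 = min (x - a) (b - x) ^ γ * min (x - a) (b - x) ^ (-γ) := by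
          rw [← Real.rpow_add hmin, add_neg_cancel, Real.rpow_zero]
      _ ≤ (b - a) ^ γ * min (x - a) (b - x) ^ (-γ) := by gcongr
  linarith [mul_le_mul_of_nonneg_left hone hs]

end Weight

theorem stmt12_general (γ a b c d : ℝ) (hγ0 : 0 ≤ γ) (hγ1 : γ < 1) (hab : a < b) (hcd : c < d)
    (u : ℝ → ℝ → ℝ)
    (hu : ContDiffOn ℝ 4 (Function.uncurry u) (Set.Icc a b ×ˢ Set.Icc c d)) :
    ∃ C > 0, ∀ Mx My : ℕ, 1 ≤ Mx → 1 ≤ My →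
      ∀ i j : ℕ, 1 ≤ i → i ≤ 2 * Mx - 1 → 1 ≤ j → j ≤ 2 * My - 1 →
      ∀ hx hy xi yj ei ej : ℝ,
        hx = (b - a) / Mx → hy = (d - c) / My →
        xi = a + (i : ℝ) * hx / 2 → yj = c + (j : ℝ) * hy / 2 →
        ei = min (xi - a) (b - xi) → ej = min (yj - c) (d - yj) →
        |∫ y' in c..d, ∫ x' in a..b,
            (u x' y' - quadInterp a c hx hy Mx My u x' y') *
              ((xi - x') ^ 2 + (yj - y') ^ 2) ^ (-γ / 2)| ≤
          C * (hx ^ 4 * ei ^ (-γ) + hy ^ 4 * ej ^ (-γ)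
              + hx ^ ((5 : ℝ) - γ) + hy ^ ((5 : ℝ) - γ)) := by
  obtain ⟨C, hC, hbound⟩ :=
    exists_abs_integral_sub_quadInterp_mul_cauchyKernel_le hγ0 hγ1 hab hcd hu
  rw [← sub_pos] at hab hcd
  refine ⟨C * ((b - a) ^ γ + (d - c) ^ γ), by positivity, ?_⟩
  intro Mx My hMx hMy i j hi hiM hj hjM hx hy xi yj ei ej hhx hhy hxi hyj hei hej
  have hx_pos : 0 < hx := by rw [hhx]; positivity
  have hy_pos : 0 < hy := by rw [hhy]; positivity
  have hb : a + Mx * hx = b := by rw [hhx]; field_simp; ring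
  have hd : c + My * hy = d := by rw [hhy]; field_simp; ring
  have hxi_mem : xi ∈ Set.Ioo a b := hxi ▸ hb ▸ node_mem_Ioo hx_pos hi hiM
  have hyj_mem : yj ∈ Set.Ioo c d := hyj ▸ hd ▸ node_mem_Ioo hy_pos hj hjM
  have hx_weight : hx ^ 4 ≤ (b - a) ^ γ * (hx ^ 4 * ei ^ (-γ)) :=
    hei ▸ le_rpow_mul_mul_rpow_neg hγ0 (by positivity) hxi_mem
  have hy_weight : hy ^ 4 ≤ (d - c) ^ γ * (hy ^ 4 * ej ^ (-γ)) :=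
    hej ▸ le_rpow_mul_mul_rpow_neg hγ0 (by positivity) hyj_mem
  have hei_pos : 0 < ei := hei ▸ lt_min (sub_pos.2 hxi_mem.1) (sub_pos.2 hxi_mem.2)
  have hej_pos : 0 < ej := hej ▸ lt_min (sub_pos.2 hyj_mem.1) (sub_pos.2 hyj_mem.2)
  calc _ ≤ C * (hx ^ 4 + hy ^ 4) := by
        rw [hhx, hhy]
        exact hbound Mx My hMx hMy xi (Set.Ioo_subset_Icc_self hxi_mem) yj
          (Set.Ioo_subset_Icc_self hyj_mem)
    _ ≤ C * ((b - a) ^ γ * (hx ^ 4 * ei ^ (-γ)) + (d - c) ^ γ * (hy ^ 4 * ej ^ (-γ))) := by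
        gcongr
    _ ≤ _ := by
        rw [mul_assoc]
        gcongr
        have hdrop : 0 ≤ (b - a) ^ γ * (hy ^ 4 * ej ^ (-γ) + hx ^ (5 - γ) + hy ^ (5 - γ)) +
            (d - c) ^ γ * (hx ^ 4 * ei ^ (-γ) + hx ^ (5 - γ) + hy ^ (5 - γ)) := by positivity
        linarith

/-- Quasi-optimal error estimate for piecewise quadratic interpolation against the
additive Cauchy kernel: for `u ∈ C⁶([a,b]×[c,d])` there is `C > 0` such that
for all mesh sizes and interior collocation indices,
`|∫∫ (u − u_Q)(x,y) ((x_{i/2} − x)² + (y_{j/2} − y)²)^{−γ/2} dx dy|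
  ≤ C (h_x⁴ η_{i/2}^{−γ} + h_y⁴ η̃_{j/2}^{−γ} + h_x^{5−γ} + h_y^{5−γ})`. -/
theorem stmt12 (γ a b c d : ℝ) (hγ0 : 0 < γ) (hγ1 : γ < 1) (hab : a < b) (hcd : c < d)
    (u : ℝ → ℝ → ℝ)
    (hu : ContDiffOn ℝ 6 (Function.uncurry u) (Set.Icc a b ×ˢ Set.Icc c d)) :
    ∃ C > 0, ∀ Mx My : ℕ, 1 ≤ Mx → 1 ≤ My →
      ∀ i j : ℕ, 1 ≤ i → i ≤ 2 * Mx - 1 → 1 ≤ j → j ≤ 2 * My - 1 →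
      ∀ hx hy xi yj ei ej : ℝ,
        hx = (b - a) / Mx → hy = (d - c) / My →
        xi = a + (i : ℝ) * hx / 2 → yj = c + (j : ℝ) * hy / 2 →
        ei = min (xi - a) (b - xi) → ej = min (yj - c) (d - yj) →
        |∫ y' in c..d, ∫ x' in a..b,
            (u x' y' - quadInterp a c hx hy Mx My u x' y') *
              ((xi - x') ^ 2 + (yj - y') ^ 2) ^ (-γ / 2)| ≤
          C * (hx ^ 4 * ei ^ (-γ) + hy ^ 4 * ej ^ (-γ)
              + hx ^ ((5 : ℝ) - γ) + hy ^ ((5 : ℝ) - γ)) :=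
  stmt12_general γ a b c d hγ0.le hγ1 hab hcd u (hu.of_le (by norm_num))
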